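/- arXiv:1508.04102 — 2 statements merged into one kernel-verified Lean document; each statement's English description precedes it below -/
import Mathlib

section
/- The system of coupled pendulums φ̇ᵢ = pᵢ, ṗᵢ = −(ḧ(t)/lᵢ) cos φᵢ + (g/lᵢ) sin φᵢ − γᵢ pᵢ + (1/(mᵢ lᵢ)) ∑_{j≠i} (F_{ij}, e_{φᵢ}), i = 1,…,n, has a T-periodic solution: there exist functions φᵢ : ℝ → ℝ, pᵢ : ℝ → ℝ solving the system and satisfying φᵢ(t + T) = φᵢ(t), pᵢ(t + T) = pᵢ(t), and moreover φᵢ(t) ∈ (−π/2, π/2) for all t ∈ ℝ and all i = 1,…,n (i.e. along this solution every pendulum always remains strictly above the horizontal line through the pivots). -/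
open Real

/-- Euclidean inner product on ℝ². -/
def dot2 (u v : ℝ × ℝ) : ℝ := u.1 * v.1 + u.2 * v.2

/-- Euclidean norm on ℝ². -/
noncomputable def norm2 (u : ℝ × ℝ) : ℝ := Real.sqrt (dot2 u u)

/-- Position of the bob of a pendulum with pivot abscissa `σ + h t`, length `l`
and angle `φ` measured from the upward vertical. -/
noncomputable def pendBob (σ : ℝ) (h : ℝ → ℝ) (l : ℝ) (t φ : ℝ) : ℝ × ℝ :=
  (σ + h t + l * Real.sin φ, l * Real.cos φ)

/-- The unit vector `e_φ = (cos φ, −sin φ)`. -/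
noncomputable def ephi (φ : ℝ) : ℝ × ℝ := (Real.cos φ, -Real.sin φ)

/-- `(F_{ij}, e_{φᵢ})`, the component of the repelling force
`F_{ij} = f_{ij}(φᵢ,φⱼ)·(rᵢ−rⱼ)/|rᵢ−rⱼ|` along `e_{φᵢ}`. -/
noncomputable def interDot (σi σj : ℝ) (h : ℝ → ℝ) (li lj : ℝ)
    (fij : ℝ → ℝ → ℝ) (t φi φj : ℝ) : ℝ :=
  fij φi φj / norm2 (pendBob σi h li t φi - pendBob σj h lj t φj) *
    dot2 (pendBob σi h li t φi - pendBob σj h lj t φj) (ephi φi)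

/-- Right-hand side of the equation for `ṗᵢ` of the `i`-th pendulum:
`−(ḧ/lᵢ)cos φᵢ + (g/lᵢ) sin φᵢ − γᵢ pᵢ + (1/(mᵢ lᵢ)) ∑_{j≠i} (F_{ij}, e_{φᵢ})`. -/
noncomputable def pendRHS (n : ℕ) (g : ℝ) (m l γ σ : Fin n → ℝ) (h : ℝ → ℝ)
    (f : Fin n → Fin n → ℝ → ℝ → ℝ) (i : Fin n) (t : ℝ)
    (φ : Fin n → ℝ) (pi : ℝ) : ℝ :=
  -(deriv (deriv h) t) / l i * Real.cos (φ i) + g / l i * Real.sin (φ i)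
    - γ i * pi
    + (1 / (m i * l i)) *
        ∑ j ∈ Finset.univ.erase i, interDot (σ i) (σ j) h (l i) (l j) (f i j) t (φ i) (φ j)

section PendulumAux
open Polynomial Set Metric MeasureTheory

lemma br_det_poly {N : ℕ} (L : EuclideanSpace ℝ (Fin N) →L[ℝ] EuclideanSpace ℝ (Fin N)) :
    ∃ P : ℝ[X], P.natDegree ≤ N ∧
      ∀ t : ℝ, P.eval t = (ContinuousLinearMap.id ℝ (EuclideanSpace ℝ (Fin N)) + t • L).det := by
  classical
  let b := (EuclideanSpace.basisFun (Fin N) ℝ).toBasis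
  let A := LinearMap.toMatrix b b (L : EuclideanSpace ℝ (Fin N) →ₗ[ℝ] EuclideanSpace ℝ (Fin N))
  refine ⟨Matrix.det ((X : ℝ[X]) • A.map C + (1 : Matrix (Fin N) (Fin N) ℝ).map C), ?_, ?_⟩
  · simpa using natDegree_det_X_add_C_le A 1
  · intro t
    have h1 : ∀ Q : Matrix (Fin N) (Fin N) ℝ[X], Q.det.eval t = (Q.map (eval t)).det := by
      intro Q
      exact RingHom.map_det (evalRingHom t) Q
    rw [h1, ContinuousLinearMap.det, ← LinearMap.det_toMatrix b]
    congr 1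
    ext i j
    simp [A, LinearMap.toMatrix_apply, Matrix.one_apply, b]
    by_cases hij : i = j <;> simp [hij] <;> ring

lemma br_weights (N : ℕ) (v : Fin (N + 1) → ℝ) (hv : Function.Injective v) :
    ∃ w : Fin (N + 1) → ℝ, ∀ P : ℝ[X], P.natDegree ≤ N → P.eval 1 = ∑ k, w k * P.eval (v k) := by
  classical
  refine ⟨fun k => (Lagrange.basis Finset.univ v k).eval 1, fun P hP => ?_⟩
  have hd : P.degree < (Finset.univ : Finset (Fin (N+1))).card := by
    simp only [Finset.card_univ, Fintype.card_fin]
    exact lt_of_le_of_lt (degree_le_natDegree) (by exact_mod_cast Nat.lt_succ_of_le hP)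
  have := Lagrange.eq_interpolate (s := Finset.univ) (v := v) hv.injOn hd
  conv_lhs => rw [this]
  rw [Lagrange.interpolate_apply, eval_finsetSum]
  refine Finset.sum_congr rfl fun k _ => ?_
  simp [mul_comm]

/-- extension by zero of a Lipschitz function on the ball vanishing on the sphere -/
lemma br_ext_lip {E : Type*} [NormedAddCommGroup E] [NormedSpace ℝ E] {R : ℝ}
    {g : E → E} {M : ℝ} (hM : 0 ≤ M)
    (hlip : ∀ x ∈ closedBall (0 : E) R, ∀ y ∈ closedBall (0 : E) R, ‖g y - g x‖ ≤ M * ‖y - x‖)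
    (hz : ∀ x, ‖x‖ = R → g x = 0) (G : E → E) (hG1 : ∀ x, ‖x‖ ≤ R → G x = g x)
    (hG2 : ∀ x, R < ‖x‖ → G x = 0) (x y : E) : ‖G y - G x‖ ≤ M * ‖y - x‖ := by
  have key : ∀ x y : E, ‖x‖ ≤ R → R < ‖y‖ → ‖G y - G x‖ ≤ M * ‖y - x‖ := by
    intro x y hx hy
    have hc : ContinuousOn (fun s : ℝ => ‖x + s • (y - x)‖) (Icc 0 1) := by fun_prop
    obtain ⟨s, ⟨hs0, hs1⟩, hs⟩ := intermediate_value_Icc (zero_le_one) hc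
      (show R ∈ Icc _ _ by simp [hx, hy.le])
    have h1 : G y = g (x + s • (y - x)) := by rw [hG2 y hy, hz _ hs]
    rw [h1, hG1 x hx]
    refine (hlip x (by simpa using hx) _ (by simpa using hs.le)).trans ?_
    gcongr
    rw [add_sub_cancel_left, norm_smul, Real.norm_of_nonneg hs0]
    exact mul_le_of_le_one_left (norm_nonneg _) hs1
  rcases le_or_gt ‖x‖ R with hx | hx <;> rcases le_or_gt ‖y‖ R with hy | hy
  · rw [hG1 x hx, hG1 y hy]
    exact hlip x (by simpa using hx) y (by simpa using hy)
  · exact key x y hx hy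
  · rw [norm_sub_rev, norm_sub_rev y x]
    exact key y x hy hx
  · rw [hG2 x hx, hG2 y hy]; simp; positivity

lemma br_bij {E : Type*} [NormedAddCommGroup E] [NormedSpace ℝ E] [CompleteSpace E] {R : ℝ}
    {g : E → E} {M : ℝ} (hM : 0 ≤ M)
    (hlip : ∀ x ∈ closedBall (0 : E) R, ∀ y ∈ closedBall (0 : E) R, ‖g y - g x‖ ≤ M * ‖y - x‖)
    (hz : ∀ x, ‖x‖ = R → g x = 0) {t : ℝ} (ht : 0 ≤ t) (htM : t * M < 1) :
    InjOn (fun x => x + t • g x) (closedBall 0 R) ∧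
      (fun x => x + t • g x) '' (closedBall 0 R) = closedBall 0 R := by
  classical
  let G : E → E := fun x => if ‖x‖ ≤ R then g x else 0
  have hG1 : ∀ x, ‖x‖ ≤ R → G x = g x := fun x hx => if_pos hx
  have hG2 : ∀ x, R < ‖x‖ → G x = 0 := fun x hx => if_neg (not_le.2 hx)
  have hL := br_ext_lip hM hlip hz G hG1 hG2
  have hinj : ∀ x y, x + t • G x = y + t • G y → x = y := by
    intro x y hxy
    have h1 : y - x = - (t • (G y - G x)) := by
      rw [smul_sub]
      have : y = x + t • G x - t • G y := by rw [hxy]; abel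
      nth_rewrite 1 [this]; abel
    have h2 : ‖y - x‖ ≤ (t * M) * ‖y - x‖ := by
      nth_rewrite 1 [h1]
      rw [norm_neg, norm_smul, Real.norm_of_nonneg ht, mul_assoc]
      exact mul_le_mul_of_nonneg_left (hL x y) ht
    have h3 : ‖y - x‖ = 0 := by nlinarith [norm_nonneg (y - x)]
    exact (sub_eq_zero.1 (norm_eq_zero.1 h3)).symm
  have hsurj : ∀ y, ∃ x, x + t • G x = y := by
    intro y
    have hc : ContractingWith (t * M).toNNReal (fun x => y - t • G x) := by
      refine ⟨by simpa using htM, LipschitzWith.of_dist_le_mul fun a b => ?_⟩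
      simp only [dist_eq_norm, sub_sub_sub_cancel_left, ← smul_sub, norm_smul,
        Real.norm_of_nonneg ht, Real.coe_toNNReal _ (mul_nonneg ht hM)]
      rw [norm_sub_rev a b, mul_assoc]
      exact mul_le_mul_of_nonneg_left (hL a b) ht
    have := hc.fixedPoint_isFixedPt
    exact ⟨ContractingWith.fixedPoint _ hc, eq_sub_iff_add_eq.1 (Eq.symm this)⟩
  constructor
  · intro x hx y hy hxy
    have hx' : ‖x‖ ≤ R := by simpa using hx
    have hy' : ‖y‖ ≤ R := by simpa using hy
    apply hinj
    rw [hG1 x hx', hG1 y hy']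
    exact hxy
  · ext y
    constructor
    · rintro ⟨x, hx, rfl⟩
      have hx' : ‖x‖ ≤ R := by simpa using hx
      by_contra hcon
      have hy' : R < ‖x + t • g x‖ := by simpa using hcon
      have := hinj x (x + t • g x) (by rw [hG2 _ hy', hG1 _ hx']; simp)
      rw [← this] at hy'
      linarith
    · intro hy
      have hy' : ‖y‖ ≤ R := by simpa using hy
      obtain ⟨x, hx⟩ := hsurj y
      have hx' : ‖x‖ ≤ R := by
        by_contra hcon
        rw [hG2 x (not_le.1 hcon)] at hx
        simp at hx
        rw [hx] at hcon
        exact hcon hy'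
      exact ⟨x, by simpa using hx', by rw [← hx, hG1 x hx']⟩

abbrev BrE (N : ℕ) : Type := EuclideanSpace ℝ (Fin N)

lemma br_no_retraction {N : ℕ} {R : ℝ} (hR : 0 < R)
    {U : Set ((BrE N))} (hU : IsOpen U) (hBU : closedBall 0 R ⊆ U)
    {r : (BrE N) → (BrE N)} (hr : ContDiffOn ℝ 1 r U)
    (hid : ∀ x, ‖x‖ = R → r x = x) (hdet : ∀ x ∈ closedBall 0 R, (fderiv ℝ r x).det = 0) :
    False := by
  let g : (BrE N) → (BrE N) := fun x => r x - x
  let D : (BrE N) → (BrE N) →L[ℝ] (BrE N) := fun x => fderiv ℝ r x - ContinuousLinearMap.id ℝ (BrE N)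
  have hB : IsCompact (closedBall (0 : (BrE N)) R) := isCompact_closedBall 0 R
  have hdiff : ∀ x ∈ closedBall (0 : (BrE N)) R, DifferentiableAt ℝ r x := fun x hx =>
    (hr.differentiableOn (by norm_num)).differentiableAt (hU.mem_nhds (hBU hx))
  have hgD : ∀ x ∈ closedBall (0 : (BrE N)) R, HasFDerivAt g (D x) x := fun x hx =>
    (hdiff x hx).hasFDerivAt.sub (hasFDerivAt_id x)
  have hDc : ContinuousOn D (closedBall (0 : (BrE N)) R) :=
    ((hr.continuousOn_fderiv_of_isOpen hU (by norm_num)).mono hBU).sub continuousOn_const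
  obtain ⟨M0, hM0⟩ := hB.exists_bound_of_continuousOn hDc
  set M := max M0 1 with hMdef
  have hM1 : (1 : ℝ) ≤ M := le_max_right _ _
  have hM : ∀ x ∈ closedBall (0 : (BrE N)) R, ‖D x‖ ≤ M := fun x hx => (hM0 x hx).trans (le_max_left _ _)
  have hlip : ∀ x ∈ closedBall (0 : (BrE N)) R, ∀ y ∈ closedBall (0 : (BrE N)) R,
      ‖g y - g x‖ ≤ M * ‖y - x‖ := fun x hx y hy =>
    (convex_closedBall (0 : (BrE N)) R).norm_image_sub_le_of_norm_hasFDerivWithin_le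
      (fun z hz => (hgD z hz).hasFDerivWithinAt) hM hx hy
  have hz : ∀ x, ‖x‖ = R → g x = 0 := fun x hx => by simp [g, hid x hx]
  -- positivity of determinant near identity
  have hcd : ∀ᶠ A : (BrE N) →L[ℝ] (BrE N) in nhds 0, 0 < (ContinuousLinearMap.id ℝ (BrE N) + A).det := by
    have hc : Continuous fun A : (BrE N) →L[ℝ] (BrE N) => (ContinuousLinearMap.id ℝ (BrE N) + A).det :=
      ContinuousLinearMap.continuous_det.comp (continuous_const.add continuous_id)
    refine hc.continuousAt.eventually (lt_mem_nhds ?_)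
    simp [ContinuousLinearMap.det]
  obtain ⟨δ, hδ, hδdet⟩ := Metric.eventually_nhds_iff.1 hcd
  set t0 : ℝ := min δ 1 / (2 * M) with ht0
  have ht0pos : 0 < t0 := by positivity
  let v : Fin (N + 1) → ℝ := fun k => t0 * (((k : ℕ) + 1 : ℝ) / (N + 1))
  have hvinj : Function.Injective v := by
    intro a b hab
    have hN : (0 : ℝ) < N + 1 := by positivity
    simp only [v] at hab
    field_simp at hab
    have : ((a : ℕ) : ℝ) = b := by linarith
    exact Fin.ext (by exact_mod_cast this)
  have hv0 : ∀ k, 0 ≤ v k := fun k => by positivity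
  have hv1 : ∀ k, v k ≤ t0 := fun k => by
    have hN : (0 : ℝ) < N + 1 := by positivity
    have : ((k : ℕ) : ℝ) + 1 ≤ N + 1 := by exact_mod_cast k.2
    exact mul_le_of_le_one_right ht0pos.le ((div_le_one hN).2 this)
  have hvM : ∀ k, v k * M ≤ min δ 1 / 2 := fun k => by
    calc v k * M ≤ t0 * M := by gcongr; exact hv1 k
      _ = min δ 1 / 2 := by rw [ht0]; field_simp
  obtain ⟨w, hw⟩ := br_weights N v hvinj
  let q : (BrE N) → ℝ → ℝ := fun x t => (ContinuousLinearMap.id ℝ (BrE N) + t • D x).det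
  have hq1 : ∀ x, q x 1 = ∑ k, w k * q x (v k) := by
    intro x
    obtain ⟨P, hP, hPe⟩ := br_det_poly (D x)
    have := hw P hP
    simpa only [hPe] using this
  have hqc : ∀ t, ContinuousOn (fun x => q x t) (closedBall (0 : (BrE N)) R) := fun t =>
    ContinuousLinearMap.continuous_det.comp_continuousOn
      (continuousOn_const.add (hDc.const_smul t))
  have hqi : ∀ t, IntegrableOn (fun x => q x t) (closedBall (0 : (BrE N)) R) volume := fun t =>
    (hqc t).integrableOn_compact hB
  have hint : ∀ k, ∫ x in closedBall (0 : (BrE N)) R, q x (v k) = volume.real (closedBall (0 : (BrE N)) R) := by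
    intro k
    have hlt : v k * M < 1 := lt_of_le_of_lt (hvM k) (by
      have := min_le_right δ 1; linarith)
    obtain ⟨hi, him⟩ := br_bij (by linarith) hlip hz (hv0 k) hlt
    have := integral_image_eq_integral_abs_det_fderiv_smul volume
      (f' := fun x => ContinuousLinearMap.id ℝ (BrE N) + v k • D x)
      (isClosed_closedBall.measurableSet) (fun x hx =>
        ((hasFDerivAt_id x).add ((hgD x hx).const_smul (v k))).hasFDerivWithinAt) hi
        (fun _ => (1 : ℝ))
    have him' : (id + v k • g) '' closedBall (0 : (BrE N)) R = closedBall 0 R := him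
    rw [him'] at this
    simp only [integral_const, smul_eq_mul, mul_one, measureReal_restrict_apply_univ] at this
    rw [this]
    refine setIntegral_congr_fun isClosed_closedBall.measurableSet fun x hx => ?_
    symm
    apply abs_of_pos
    apply hδdet
    rw [dist_zero_right, norm_smul, Real.norm_of_nonneg (hv0 k)]
    calc v k * ‖D x‖ ≤ v k * M := by gcongr; exact hM x hx
      _ ≤ min δ 1 / 2 := hvM k
      _ < δ := by have := min_le_left δ 1; linarith
  have h1 : ∫ x in closedBall (0 : (BrE N)) R, q x 1 = ∑ k, w k * volume.real (closedBall (0 : (BrE N)) R) := by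
    simp_rw [hq1]
    rw [integral_finsetSum _ (fun k _ => (hqi (v k)).const_mul (w k))]
    refine Finset.sum_congr rfl fun k _ => ?_
    rw [integral_const_mul, hint]
  have hws : ∑ k, w k = 1 := by
    have := hw 1 (by simp)
    simpa using this.symm
  rw [← Finset.sum_mul, hws, one_mul] at h1
  have h2 : ∫ x in closedBall (0 : (BrE N)) R, q x 1 = 0 := by
    rw [setIntegral_congr_fun (g := fun _ => (0 : ℝ)) isClosed_closedBall.measurableSet]
    · simp
    · intro x hx
      simp only [q, D, one_smul, add_sub_cancel]
      exact hdet x hx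
  have h3 : 0 < volume.real (closedBall (0 : (BrE N)) R) :=
    ENNReal.toReal_pos (measure_closedBall_pos volume 0 hR).ne' measure_closedBall_lt_top.ne
  linarith

lemma br_smooth {N : ℕ} {Ψ : BrE N → BrE N} (hΨ : ContDiff ℝ 1 Ψ) (hb : ∀ x, ‖Ψ x‖ < 2) :
    ∃ x, ‖x‖ ≤ 2 ∧ Ψ x = x := by
  by_contra hcon
  push Not at hcon
  let u : BrE N → BrE N := fun x => x - Ψ x
  have hu : ContDiff ℝ 1 u := contDiff_id.sub hΨ
  let ip : BrE N → ℝ := fun x => inner ℝ x (u x)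
  let nu : BrE N → ℝ := fun x => inner ℝ (u x) (u x)
  let Q : BrE N → ℝ := fun x => (ip x) ^ 2 + nu x * (4 - inner ℝ x x)
  have hip : ContDiff ℝ 1 ip := contDiff_id.inner ℝ hu
  have hnu : ContDiff ℝ 1 nu := hu.inner ℝ hu
  have hQ : ContDiff ℝ 1 Q :=
    (hip.pow 2).add (hnu.mul (contDiff_const.sub (contDiff_id.inner ℝ contDiff_id)))
  let U : Set (BrE N) := {x | 0 < Q x ∧ 0 < nu x}
  have hUo : IsOpen U :=
    (isOpen_lt continuous_const hQ.continuous).inter (isOpen_lt continuous_const hnu.continuous)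
  have hne : ∀ x, ‖x‖ ≤ 2 → 0 < nu x := by
    intro x hx
    simp only [nu, real_inner_self_eq_norm_sq]
    have : u x ≠ 0 := fun h0 => hcon x hx (sub_eq_zero.1 h0).symm
    positivity
  have hipS : ∀ x, ‖x‖ = 2 → 0 < ip x := by
    intro x hx
    simp only [ip, u, inner_sub_right, real_inner_self_eq_norm_sq, hx]
    have h1 := real_inner_le_norm x (Ψ x)
    have h2 := hb x
    rw [hx] at h1
    nlinarith
  have hBU : closedBall (0 : BrE N) 2 ⊆ U := by
    intro x hx
    have hx' : ‖x‖ ≤ 2 := by simpa using hx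
    refine ⟨?_, hne x hx'⟩
    rcases hx'.lt_or_eq with h | h
    · have h1 : 0 < 4 - inner ℝ x x := by
        rw [real_inner_self_eq_norm_sq]; nlinarith [norm_nonneg x]
      have := mul_pos (hne x hx') h1
      simp only [Q]
      positivity
    · have := hipS x h
      simp only [Q, real_inner_self_eq_norm_sq, h]
      norm_num
      positivity
  let lam : BrE N → ℝ := fun x => (-(ip x) + Real.sqrt (Q x)) / nu x
  have hlam : ContDiffOn ℝ 1 lam U :=
    (hip.neg.contDiffOn.add (hQ.contDiffOn.sqrt fun x hx => hx.1.ne')).div hnu.contDiffOn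
      fun x hx => hx.2.ne'
  let r : BrE N → BrE N := fun x => x + lam x • u x
  have hr : ContDiffOn ℝ 1 r U := contDiff_id.contDiffOn.add (hlam.smul hu.contDiffOn)
  have hrn : ∀ x ∈ U, inner ℝ (r x) (r x) = (4 : ℝ) := by
    intro x hx
    have hs := Real.sq_sqrt hx.1.le
    have hl : lam x * nu x = -(ip x) + Real.sqrt (Q x) := div_mul_cancel₀ _ hx.2.ne'
    have hexp : inner ℝ (r x) (r x) = inner ℝ x x + 2 * lam x * ip x + lam x ^ 2 * nu x := by
      simp only [r, ip, nu, inner_add_left, inner_add_right, real_inner_smul_left,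
        real_inner_smul_right, real_inner_comm x (u x)]
      ring
    have h1 : nu x * (inner ℝ (r x) (r x) - 4) = 0 := by
      rw [hexp]
      have hQx : Q x = (ip x) ^ 2 + nu x * (4 - inner ℝ x x) := rfl
      have : (lam x * nu x + ip x) ^ 2 = Q x := by rw [hl]; ring_nf; exact hs
      rw [hQx] at this
      linear_combination this
    rcases mul_eq_zero.1 h1 with h | h
    · exact absurd h hx.2.ne'
    · linarith
  refine br_no_retraction (N := N) (R := 2) (by norm_num) hUo hBU hr ?_ ?_
  · intro x hx
    have h1 : lam x = 0 := by
      simp only [lam, Q, real_inner_self_eq_norm_sq, hx]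
      norm_num
      left
      rw [Real.sqrt_sq (hipS x hx).le]; ring
    simp [r, h1]
  · intro x hx
    have hxU := hBU hx
    have hd : HasFDerivAt r (fderiv ℝ r x) x :=
      ((hr.differentiableOn (by norm_num)).differentiableAt (hUo.mem_nhds hxU)).hasFDerivAt
    by_contra hdet
    have hin := hd.inner ℝ hd
    have hconst : HasFDerivAt (fun y => inner ℝ (r y) (r y)) (0 : BrE N →L[ℝ] ℝ) x := by
      refine (hasFDerivAt_const (4 : ℝ) x).congr_of_eventuallyEq ?_
      filter_upwards [hUo.mem_nhds hxU] with y hy using hrn y hy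
    have heq := hin.unique hconst
    have horth : ∀ v, inner ℝ (r x) (fderiv ℝ r x v) = (0 : ℝ) := by
      intro v
      have := congrArg (fun L : BrE N →L[ℝ] ℝ => L v) heq
      simp [real_inner_comm (r x)] at this
      linarith
    have hsur : Function.Surjective (fderiv ℝ r x) := by
      have := (LinearMap.equivOfDetNeZero (fderiv ℝ r x : BrE N →ₗ[ℝ] BrE N) hdet).surjective
      exact this
    obtain ⟨v, hv⟩ := hsur (r x)
    have h0 := horth v
    rw [hv, hrn x hxU] at h0
    norm_num at h0

/-- The Brouwer theorem in the form needed. -/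
lemma br_brouwer {N : ℕ} {Φ : BrE N → BrE N} (hΦ : Continuous Φ) (hb : ∀ x, ‖Φ x‖ ≤ 1) :
    ∃ x, Φ x = x := by
  have happ : ∀ n : ℕ, ∃ x ∈ closedBall (0 : BrE N) 2, ‖Φ x - x‖ ≤ 1 / ((n : ℝ) + 1) := by
    intro n
    obtain ⟨Ψ, hΨ, hd, -⟩ := hΦ.exists_contDiff_approx 1 (ε := fun _ => 1 / ((n : ℝ) + 1))
      continuous_const (fun _ => by positivity)
    have hle : 1 / ((n : ℝ) + 1) ≤ 1 := by
      rw [div_le_one (by positivity)]; linarith [(Nat.cast_nonneg n : (0 : ℝ) ≤ n)]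
    obtain ⟨x, hx, hfix⟩ := br_smooth (Ψ := Ψ) (by exact_mod_cast hΨ) (fun x => by
      have h1 := hd x
      have h2 := hb x
      rw [dist_eq_norm] at h1
      have h3 := norm_add_le (Ψ x - Φ x) (Φ x)
      rw [sub_add_cancel] at h3
      linarith)
    refine ⟨x, by simpa using hx, ?_⟩
    have := hd x
    rw [hfix, dist_eq_norm, norm_sub_rev] at this
    exact this.le
  obtain ⟨x, hx, hmin⟩ := (isCompact_closedBall (0 : BrE N) 2).exists_isMinOn
    ⟨0, by simp⟩ ((hΦ.sub continuous_id).norm.continuousOn)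
  refine ⟨x, ?_⟩
  have h0 : ‖Φ x - x‖ ≤ 0 := by
    refine ge_of_tendsto' tendsto_one_div_add_atTop_nhds_zero_nat fun n => ?_
    obtain ⟨y, hy, hyn⟩ := happ n
    exact (hmin hy).trans hyn
  exact sub_eq_zero.1 (norm_le_zero_iff.1 h0)

/-- The Schauder theorem, in the form: continuous self-map of a normed space with range in a
compact set. -/
lemma br_schauder {X : Type*} [NormedAddCommGroup X] [NormedSpace ℝ X] {A : X → X}
    (hA : Continuous A) {K : Set X} (hK : IsCompact K) (hAK : ∀ x, A x ∈ K) : ∃ x, A x = x := by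
  have happ : ∀ ε : ℝ, 0 < ε → ∃ x, ‖A x - x‖ ≤ ε := by
    intro ε hε
    obtain ⟨s, -, hsf, hcov⟩ := hK.finite_cover_balls hε
    obtain ⟨N, c, hc⟩ : ∃ (N : ℕ) (c : Fin N → X), s = range c := by
      have := hsf.fintype
      refine ⟨Fintype.card s, fun i => ((Fintype.equivFin s).symm i : X), ?_⟩
      ext x
      constructor
      · intro hx
        exact ⟨Fintype.equivFin s ⟨x, hx⟩, by simp⟩
      · rintro ⟨i, rfl⟩
        exact Subtype.coe_prop _
    let W : Fin N → X → ℝ := fun i y => max 0 (ε - ‖y - c i‖)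
    have hW0 : ∀ i y, 0 ≤ W i y := fun i y => le_max_left _ _
    have hWc : ∀ i, Continuous (W i) := fun i => by fun_prop
    let S : X → ℝ := fun y => ∑ i, W i y
    have hSc : Continuous S := continuous_finsetSum _ fun i _ => hWc i
    have hSpos : ∀ y ∈ K, 0 < S y := by
      intro y hy
      have := hcov hy
      simp only [mem_iUnion, hc] at this
      obtain ⟨z, ⟨i, rfl⟩, hz⟩ := this
      refine Finset.sum_pos' (fun i _ => hW0 i y) ⟨i, Finset.mem_univ i, ?_⟩
      rw [mem_ball, dist_eq_norm] at hz
      exact lt_max_of_lt_right (by linarith)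
    let J : BrE N → X := fun a => ∑ i, a i • c i
    have hJ : Continuous J := by fun_prop
    let Φ : BrE N → BrE N := fun a => WithLp.toLp 2 fun i => W i (A (J a)) / S (A (J a))
    have hΦ : Continuous Φ := by
      refine (PiLp.continuous_toLp 2 _).comp (continuous_pi fun i => ?_)
      exact ((hWc i).comp (hA.comp hJ)).div (hSc.comp (hA.comp hJ)) fun a => (hSpos _ (hAK _)).ne'
    have hsum : ∀ a, ∑ i, Φ a i = 1 := by
      intro a
      simp only [Φ]
      rw [← Finset.sum_div]
      exact div_self (hSpos _ (hAK _)).ne'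
    have hnn : ∀ a i, 0 ≤ Φ a i := fun a i => div_nonneg (hW0 _ _) (hSpos _ (hAK _)).le
    have hb : ∀ a, ‖Φ a‖ ≤ 1 := by
      intro a
      rw [EuclideanSpace.norm_eq]
      refine Real.sqrt_le_one.2 ?_
      rw [← hsum a]
      refine Finset.sum_le_sum fun i _ => ?_
      have h1 : Φ a i ≤ 1 := by
        rw [← hsum a]
        exact Finset.single_le_sum (fun j _ => hnn a j) (Finset.mem_univ i)
      rw [Real.norm_of_nonneg (hnn a i)]
      nlinarith [hnn a i]
    obtain ⟨a, ha⟩ := br_brouwer hΦ hb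
    refine ⟨J a, ?_⟩
    have hs1 : ∑ i, a i = 1 := by rw [← ha]; exact hsum a
    have ha0 : ∀ i, 0 ≤ a i := by rw [← ha]; exact hnn a
    have e1 : A (J a) - J a = ∑ i, a i • (A (J a) - c i) := by
      simp only [smul_sub, Finset.sum_sub_distrib, ← Finset.sum_smul, hs1, one_smul, J]
    rw [e1]
    calc ‖∑ i, a i • (A (J a) - c i)‖ ≤ ∑ i, a i * ε := by
          refine (norm_sum_le _ _).trans (Finset.sum_le_sum fun i _ => ?_)
          rw [norm_smul, Real.norm_of_nonneg (ha0 i)]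
          rcases le_or_gt ‖A (J a) - c i‖ ε with h | h
          · exact mul_le_mul_of_nonneg_left h (ha0 i)
          · have : a i = 0 := by
              rw [← ha]
              simp only [Φ, W]
              rw [max_eq_left (by linarith), zero_div]
            simp [this]
      _ = ε := by rw [← Finset.sum_mul, hs1, one_mul]
  -- pass to the limit, using compactness of K : A has fixed point among K
  have hKne : K.Nonempty := ⟨A 0, hAK 0⟩
  choose x hx using fun n : ℕ => happ (1 / ((n : ℝ) + 1)) (by positivity)
  obtain ⟨y, hy, φ, hφ, hlim⟩ := hK.tendsto_subseq (x := fun n => A (x n)) (fun n => hAK _)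
  have h0 : Filter.Tendsto (fun n => A (x (φ n)) - x (φ n)) Filter.atTop (nhds 0) := by
    refine squeeze_zero_norm (fun n => hx (φ n)) ?_
    exact (tendsto_one_div_add_atTop_nhds_zero_nat (𝕜 := ℝ)).comp hφ.tendsto_atTop
  have h1 : Filter.Tendsto (fun n => x (φ n)) Filter.atTop (nhds y) := by
    have := hlim.sub h0
    simpa using this
  exact ⟨y, tendsto_nhds_unique ((hA.tendsto y).comp h1) hlim⟩

lemma od_exists {T : ℝ} (hT : 0 < T) {c : ℝ} (hc : c ≠ 0) {v : ℝ → ℝ} (hv : Continuous v)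
    (hper : Function.Periodic v T) :
    ∃ y : ℝ → ℝ, (∀ t, HasDerivAt y (c * y t + v t) t) ∧ Function.Periodic y T := by
  let I : ℝ → ℝ := fun t => ∫ s in (0 : ℝ)..t, Real.exp (-(c * s)) * v s
  have hcont : Continuous fun s => Real.exp (-(c * s)) * v s := by fun_prop
  have hI : ∀ t, HasDerivAt I (Real.exp (-(c * t)) * v t) t := fun t =>
    intervalIntegral.integral_hasDerivAt_right (hcont.intervalIntegrable _ _)
      (hcont.stronglyMeasurableAtFilter _ _) hcont.continuousAt
  have hne : 1 - Real.exp (c * T) ≠ 0 := by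
    intro h0
    have : c * T = 0 := Real.exp_eq_one_iff _ |>.1 (by linarith)
    rcases mul_eq_zero.1 this with h | h
    · exact hc h
    · exact hT.ne' h
  let y0 : ℝ := Real.exp (c * T) * I T / (1 - Real.exp (c * T))
  let y : ℝ → ℝ := fun t => Real.exp (c * t) * (y0 + I t)
  have hy : ∀ t, HasDerivAt y (c * y t + v t) t := by
    intro t
    have h1 : HasDerivAt (fun t => Real.exp (c * t)) (Real.exp (c * t) * c) t := by
      simpa using ((hasDerivAt_id t).const_mul c).exp
    have h2 := h1.mul ((hI t).const_add y0)
    refine h2.congr_deriv ?_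
    have h3 : Real.exp (c * t) * Real.exp (-(c * t)) = 1 := by
      rw [← Real.exp_add]; simp
    simp only [y]
    linear_combination v t * h3
  refine ⟨y, hy, ?_⟩
  -- periodicity
  let z : ℝ → ℝ := fun t => Real.exp (-(c * t)) * (y (t + T) - y t)
  have hz : ∀ t, HasDerivAt z 0 t := by
    intro t
    have h1 : HasDerivAt (fun t => Real.exp (-(c * t))) (Real.exp (-(c * t)) * -c) t := by
      simpa using (((hasDerivAt_id t).const_mul c).neg).exp
    have h2 : HasDerivAt (fun t => y (t + T)) (c * y (t + T) + v (t + T)) t :=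
      (hy (t + T)).comp_add_const t T
    have h3 := h1.mul (h2.sub (hy t))
    refine h3.congr_deriv ?_
    rw [hper t]
    simp
    ring
  have hzc : ∀ t, z t = z 0 := fun t =>
    is_const_of_deriv_eq_zero (fun t => (hz t).differentiableAt) (fun t => (hz t).deriv) t 0
  have hz0 : z 0 = 0 := by
    have hI0 : I 0 = 0 := by simp [I]
    simp only [z, y, zero_add, mul_zero, hI0, Real.exp_zero, neg_zero]
    simp only [y0]
    field_simp
    ring
  intro t
  have := hzc t
  rw [hz0] at this
  rcases mul_eq_zero.1 this with h | h
  · exact absurd h (Real.exp_pos _).ne'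
  · linarith

lemma od_max {T : ℝ} (hT : 0 < T) {y : ℝ → ℝ} (hc : Continuous y) (hper : Function.Periodic y T) :
    ∃ t0, ∀ t, y t ≤ y t0 := by
  obtain ⟨t0, -, h0⟩ := (isCompact_Icc (a := (0 : ℝ)) (b := T)).exists_isMaxOn
    ⟨0, by simp [hT.le]⟩ hc.continuousOn
  refine ⟨t0, fun t => ?_⟩
  obtain ⟨s, hs, hst⟩ := hper.exists_mem_Ico₀ hT t
  rw [hst]
  exact h0 (Ico_subset_Icc_self hs)

lemma od_bound {T : ℝ} (hT : 0 < T) {c : ℝ} (hc : 1 ≤ |c|) {y v : ℝ → ℝ} {M : ℝ}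
    (hy : ∀ t, HasDerivAt y (c * y t + v t) t) (hper : Function.Periodic y T)
    (hM : ∀ t, |v t| ≤ M) (t : ℝ) : |y t| ≤ M := by
  have hyc : Continuous y := continuous_iff_continuousAt.2 fun t => (hy t).continuousAt
  obtain ⟨t0, h0⟩ := od_max hT (y := fun t => y t ^ 2) (by fun_prop) (fun t => by
    simp only [hper t])
  have hd : HasDerivAt (fun t => y t ^ 2) (2 * y t0 * (c * y t0 + v t0)) t0 := by
    refine ((hy t0).pow 2).congr_deriv ?_
    simp
  have hz := IsLocalMax.hasDerivAt_eq_zero (Filter.Eventually.of_forall h0) hd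
  have hM0 : 0 ≤ M := (abs_nonneg _).trans (hM 0)
  have key : |y t0| ≤ M := by
    rcases mul_eq_zero.1 hz with h | h
    · have : y t0 = 0 := by linarith
      simpa [this] using hM0
    · have h1 : |c| * |y t0| = |v t0| := by
        rw [← abs_mul, ← abs_neg (v t0)]; congr 1; linarith
      have := hM t0
      nlinarith [abs_nonneg (y t0)]
  exact (sq_le_sq.1 (h0 t)).trans key

section
lemma od_lift {T : ℝ} {n : ℕ} (y : ℝ → Fin n → ℝ) (hy : Continuous y) (hper : Function.Periodic y T) :
    ∃ Y : C(AddCircle T, Fin n → ℝ), ∀ t : ℝ, Y (t : AddCircle T) = y t :=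
  ⟨⟨hper.lift, continuous_coinduced_dom.2 hy⟩, fun _ => rfl⟩

variable {T : ℝ} [hTf : Fact (0 < T)] {n : ℕ}

lemma od_solver (c : Fin n → ℝ) (hc : ∀ i, 1 ≤ |c i|) (v : C(AddCircle T, Fin n → ℝ)) :
    ∃ Y : C(AddCircle T, Fin n → ℝ), ∀ (t : ℝ) i,
      HasDerivAt (fun s : ℝ => Y (s : AddCircle T) i)
        (c i * Y (t : AddCircle T) i + v (t : AddCircle T) i) t := by
  have hex : ∀ i, ∃ y : ℝ → ℝ, (∀ t, HasDerivAt y (c i * y t + v (t : AddCircle T) i) t) ∧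
      Function.Periodic y T := by
    intro i
    refine od_exists hTf.out (fun h0 => ?_) (v := fun t : ℝ => v (t : AddCircle T) i) ?_ ?_
    · have := hc i
      rw [h0] at this
      norm_num at this
    · exact (continuous_apply i).comp (v.continuous.comp (AddCircle.continuous_mk' T))
    · intro t
      simp
  choose y hy hper using hex
  obtain ⟨Y, hY⟩ := od_lift (T := T) (fun t i => y i t)
    (continuous_pi fun i => continuous_iff_continuousAt.2 fun t => (hy i t).continuousAt)
    (fun t => by ext i; exact hper i t)
  refine ⟨Y, fun t i => ?_⟩
  simp only [hY]
  exact hy i t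

lemma od_compact (M : ℝ) (Λ : ℝ) :
    ∃ K : Set C(AddCircle T, Fin n → ℝ), IsCompact K ∧ ∀ Y : C(AddCircle T, Fin n → ℝ),
      ‖Y‖ ≤ M → (∀ s t : ℝ, ‖Y (s : AddCircle T) - Y (t : AddCircle T)‖ ≤ Λ * |s - t|) → Y ∈ K := by
  let e := ContinuousMap.isometryEquivBoundedOfCompact (AddCircle T) (Fin n → ℝ)
  let S : Set (BoundedContinuousFunction (AddCircle T) (Fin n → ℝ)) :=
    {Y | (∀ x, Y x ∈ closedBall (0 : Fin n → ℝ) M) ∧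
      ∀ s t : ℝ, ‖Y (s : AddCircle T) - Y (t : AddCircle T)‖ ≤ Λ * |s - t|}
  have hS : IsCompact (closure S) := by
    refine BoundedContinuousFunction.arzela_ascoli (closedBall (0 : Fin n → ℝ) M)
      (isCompact_closedBall _ _) S (fun f x hf => hf.1 x) ?_
    intro x0
    induction x0 using QuotientAddGroup.induction_on with | _ t0
    rw [Metric.equicontinuousAt_iff_right]
    intro ε hε
    change ∀ᶠ x in nhds ((t0 : ℝ) : AddCircle T), _
    have hmap : nhds ((t0 : ℝ) : AddCircle T) = Filter.map (fun s : ℝ => (s : AddCircle T)) (nhds t0) :=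
      QuotientAddGroup.nhds_eq _ _
    rw [hmap, Filter.eventually_map]
    have hcont : Continuous fun s : ℝ => Λ * |t0 - s| := by fun_prop
    have : ∀ᶠ s in nhds t0, Λ * |t0 - s| < ε :=
      hcont.continuousAt.eventually (gt_mem_nhds (by simpa using hε))
    filter_upwards [this] with s hs
    rintro ⟨Y, hY⟩
    rw [dist_eq_norm]
    exact (hY.2 t0 s).trans_lt hs
  refine ⟨e.symm '' closure S, hS.image e.symm.continuous, fun Y hY1 hY2 => ?_⟩
  refine ⟨e Y, subset_closure ⟨fun x => ?_, fun s t => ?_⟩, e.symm_apply_apply Y⟩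
  · rw [mem_closedBall_zero_iff]
    exact (Y.norm_coe_le_norm x).trans hY1
  · exact hY2 s t

lemma od_system (a : Fin n → ℝ) (ha : ∀ i, 1 ≤ a i)
    (F : C(AddCircle T × (Fin n → ℝ), Fin n → ℝ)) (M : ℝ) (hM : ∀ z, ‖F z‖ ≤ M) :
    ∃ φ q : C(AddCircle T, Fin n → ℝ), ∀ (t : ℝ) i,
      HasDerivAt (fun s : ℝ => φ (s : AddCircle T) i)
        (-(a i) * φ (t : AddCircle T) i + q (t : AddCircle T) i) t ∧
      HasDerivAt (fun s : ℝ => q (s : AddCircle T) i)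
        (q (t : AddCircle T) i + F ((t : AddCircle T), φ (t : AddCircle T)) i) t := by
  have hT : 0 < T := hTf.out
  have hM0 : 0 ≤ M := (norm_nonneg _).trans (hM (0, 0))
  have hS : ∀ c : Fin n → ℝ, (∀ i, 1 ≤ |c i|) →
      ∃ S : C(AddCircle T, Fin n → ℝ) → C(AddCircle T, Fin n → ℝ),
      Continuous S ∧ (∀ v, ‖S v‖ ≤ ‖v‖) ∧ ∀ v (t : ℝ) i,
      HasDerivAt (fun s : ℝ => S v (s : AddCircle T) i)
        (c i * S v (t : AddCircle T) i + v (t : AddCircle T) i) t := by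
    intro c hc
    choose S hS using od_solver (T := T) c hc
    have hperS : ∀ (v : C(AddCircle T, Fin n → ℝ)) i,
        Function.Periodic (fun s : ℝ => v (s : AddCircle T) i) T := by
      intro v i t; simp
    refine ⟨S, ?_, ?_, hS⟩
    · refine LipschitzWith.continuous (K := 1) (LipschitzWith.of_dist_le_mul fun v w => ?_)
      rw [NNReal.coe_one, one_mul, dist_eq_norm, dist_eq_norm]
      refine (ContinuousMap.norm_le _ (norm_nonneg _)).2 fun x => ?_
      refine (pi_norm_le_iff_of_nonneg (norm_nonneg _)).2 fun i => ?_
      induction x using QuotientAddGroup.induction_on with | _ t0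
      refine od_bound hT (hc i) (y := fun s : ℝ => (S v - S w) (s : AddCircle T) i)
        (v := fun s : ℝ => (v - w) (s : AddCircle T) i) ?_ (hperS _ i) ?_ t0
      · intro t
        refine ((hS v t i).sub (hS w t i)).congr_deriv ?_
        simp
        ring
      · intro t
        exact (norm_le_pi_norm ((v - w) (t : AddCircle T)) i).trans
          (ContinuousMap.norm_coe_le_norm _ _)
    · intro v
      refine (ContinuousMap.norm_le _ (norm_nonneg _)).2 fun x => ?_
      refine (pi_norm_le_iff_of_nonneg (norm_nonneg _)).2 fun i => ?_
      induction x using QuotientAddGroup.induction_on with | _ t0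
      refine od_bound hT (hc i) (y := fun s : ℝ => (S v) (s : AddCircle T) i)
        (v := fun s : ℝ => v (s : AddCircle T) i) (fun t => hS v t i) (hperS _ i) ?_ t0
      intro t
      exact (norm_le_pi_norm (v (t : AddCircle T)) i).trans (ContinuousMap.norm_coe_le_norm _ _)
  obtain ⟨S1, hS1c, hS1n, hS1⟩ := hS (fun _ => 1) (by simp)
  obtain ⟨S2, hS2c, hS2n, hS2⟩ := hS (fun i => -(a i)) (fun i => by
    rw [abs_neg]; exact (ha i).trans (le_abs_self _))
  let Nem : C(AddCircle T, Fin n → ℝ) → C(AddCircle T, Fin n → ℝ) := fun v =>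
    F.comp ((ContinuousMap.id (AddCircle T)).prodMk v)
  have hNem : Continuous Nem := by
    refine ContinuousMap.continuous_of_continuous_uncurry _ ?_
    have : Continuous fun p : C(AddCircle T, Fin n → ℝ) × AddCircle T => F (p.2, p.1 p.2) :=
      F.continuous.comp (continuous_snd.prodMk ContinuousEval.continuous_eval)
    exact this
  have hNemn : ∀ v, ‖Nem v‖ ≤ M := fun v =>
    (ContinuousMap.norm_le _ hM0).2 fun x => hM _
  let Λ : ℝ := (∑ i, a i) * M + M
  have hΛ0 : 0 ≤ Λ := by
    have : 0 ≤ ∑ i, a i := Finset.sum_nonneg fun i _ => zero_le_one.trans (ha i)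
    positivity
  obtain ⟨K, hK, hKm⟩ := od_compact (T := T) (n := n) M Λ
  obtain ⟨φ, hφ⟩ := br_schauder (A := fun v => S2 (S1 (Nem v)))
    (hS2c.comp (hS1c.comp hNem)) hK (fun v => by
      have h1 : ‖S1 (Nem v)‖ ≤ M := (hS1n _).trans (hNemn v)
      have h2 : ‖S2 (S1 (Nem v))‖ ≤ M := (hS2n _).trans h1
      have hpt : ∀ (Y : C(AddCircle T, Fin n → ℝ)) x i, ‖Y‖ ≤ M → |Y x i| ≤ M := fun Y x i hY =>
        ((norm_le_pi_norm (Y x) i).trans (ContinuousMap.norm_coe_le_norm _ _)).trans hY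
      refine hKm _ h2 fun s t => ?_
      refine (pi_norm_le_iff_of_nonneg (by positivity)).2 fun i => ?_
      refine (convex_univ (𝕜 := ℝ) (E := ℝ)).norm_image_sub_le_of_norm_hasDerivWithin_le
        (f := fun s : ℝ => S2 (S1 (Nem v)) (s : AddCircle T) i)
        (fun x _ => (hS2 (S1 (Nem v)) x i).hasDerivWithinAt) (fun x _ => ?_)
        (Set.mem_univ t) (Set.mem_univ s)
      refine (norm_add_le _ _).trans (add_le_add ?_ (hpt _ _ i h1))
      rw [norm_mul, norm_neg, Real.norm_of_nonneg (zero_le_one.trans (ha i))]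
      refine mul_le_mul ?_ (hpt _ _ i h2) (norm_nonneg _)
        (Finset.sum_nonneg fun i _ => zero_le_one.trans (ha i))
      exact Finset.single_le_sum (f := a) (fun j _ => zero_le_one.trans (ha j)) (Finset.mem_univ i))
  refine ⟨φ, S1 (Nem φ), fun t i => ⟨?_, ?_⟩⟩
  · have := hS2 (S1 (Nem φ)) t i
    have hφ' : S2 (S1 (Nem φ)) = φ := hφ
    rw [hφ'] at this
    exact this
  · have := hS1 (Nem φ) t i
    simpa [Nem] using this

end

lemma pd_deriv_per {T : ℝ} {h : ℝ → ℝ} (hp : Function.Periodic h T) :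
    Function.Periodic (deriv h) T := by
  intro t
  rw [← deriv_comp_add_const]
  congr 1
  funext s
  exact hp s

/-- no interior maximum where the second derivative is positive -/
lemma pd_no_max {y p : ℝ → ℝ} {t0 d : ℝ} (hy : ∀ t, HasDerivAt y (p t) t)
    (hp : HasDerivAt p d t0) (hmax : ∀ t, y t ≤ y t0) : p t0 = 0 ∧ d ≤ 0 := by
  have hp0 : p t0 = 0 :=
    IsLocalMax.hasDerivAt_eq_zero (Filter.Eventually.of_forall hmax) (hy t0)
  refine ⟨hp0, ?_⟩
  by_contra hd
  push Not at hd
  have hdy : deriv y = p := funext fun t => (hy t).deriv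
  have hmin := isLocalMin_of_deriv_deriv_pos (f := y) (x₀ := t0)
    (by rw [hdy, hp.deriv]; exact hd) (by rw [hdy, hp0]) (hy t0).continuousAt
  have hconst : y =ᶠ[nhds t0] fun _ => y t0 := by
    filter_upwards [hmin] with t ht using le_antisymm (hmax t) ht
  have hpe : p =ᶠ[nhds t0] fun _ => 0 := by
    have := hconst.deriv
    rw [hdy] at this
    simpa using this
  have := hpe.deriv_eq
  rw [hp.deriv] at this
  simp at this
  linarith

lemma pd_norm2_pos {σi σj li lj t x y : ℝ} {h : ℝ → ℝ} (hi : 0 < li) (hj : 0 < lj)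
    (hs : li + lj < |σi - σj|) :
    0 < norm2 (pendBob σi h li t x - pendBob σj h lj t y) := by
  unfold norm2
  apply Real.sqrt_pos.2
  simp only [dot2, pendBob, Prod.fst_sub, Prod.snd_sub]
  have hne : σi + h t + li * Real.sin x - (σj + h t + lj * Real.sin y) ≠ 0 := by
    intro h0
    have h1 : σi - σj = lj * Real.sin y - li * Real.sin x := by linarith
    rw [h1] at hs
    have h2 := abs_sub (lj * Real.sin y) (li * Real.sin x)
    rw [abs_mul, abs_mul, abs_of_pos hi, abs_of_pos hj] at h2
    nlinarith [Real.abs_sin_le_one x, Real.abs_sin_le_one y]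
  have := mul_self_pos.2 hne
  nlinarith [mul_self_nonneg (li * Real.cos x - lj * Real.cos y)]

lemma pd_inter_t (σi σj : ℝ) (h : ℝ → ℝ) (li lj : ℝ) (f : ℝ → ℝ → ℝ) (t x y : ℝ) :
    interDot σi σj h li lj f t x y = interDot σi σj h li lj f 0 x y := by
  have : pendBob σi h li t x - pendBob σj h lj t y = pendBob σi h li 0 x - pendBob σj h lj 0 y := by
    simp only [pendBob, Prod.mk_sub_mk]
    congr 1
    ring
  simp only [interDot, this]

lemma pd_inter_cont {σi σj li lj : ℝ} {h : ℝ → ℝ} {f : ℝ → ℝ → ℝ}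
    (hi : 0 < li) (hj : 0 < lj) (hs : li + lj < |σi - σj|)
    (hf : Continuous fun u : ℝ × ℝ => f u.1 u.2) :
    Continuous fun u : ℝ × ℝ => interDot σi σj h li lj f 0 u.1 u.2 := by
  have hb : Continuous fun u : ℝ × ℝ => pendBob σi h li 0 u.1 - pendBob σj h lj 0 u.2 := by
    unfold pendBob; fun_prop
  have hdot : ∀ a b : ℝ × ℝ → ℝ × ℝ, Continuous a → Continuous b →
      Continuous fun u => dot2 (a u) (b u) := by
    intro a b ha hb
    unfold dot2; fun_prop
  unfold interDot
  refine (hf.div ?_ fun u => (pd_norm2_pos hi hj hs).ne').mul (hdot _ _ hb ?_)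
  · unfold norm2
    exact (hdot _ _ hb hb).sqrt
  · unfold ephi; fun_prop

lemma pd_inter_top {σi σj li lj y t : ℝ} {h : ℝ → ℝ} {f : ℝ → ℝ → ℝ} (hj : 0 < lj)
    (hf : ∀ x y, 0 ≤ f x y) (hy : 0 ≤ Real.cos y) :
    0 ≤ interDot σi σj h li lj f t (π / 2) y := by
  unfold interDot
  refine mul_nonneg (div_nonneg (hf _ _) (Real.sqrt_nonneg _)) ?_
  simp [dot2, pendBob, ephi]
  positivity

lemma pd_inter_bot {σi σj li lj y t : ℝ} {h : ℝ → ℝ} {f : ℝ → ℝ → ℝ} (hj : 0 < lj)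
    (hf : ∀ x y, 0 ≤ f x y) (hy : 0 ≤ Real.cos y) :
    interDot σi σj h li lj f t (-(π / 2)) y ≤ 0 := by
  unfold interDot
  refine mul_nonpos_of_nonneg_of_nonpos (div_nonneg (hf _ _) (Real.sqrt_nonneg _)) ?_
  simp [dot2, pendBob, ephi]
  positivity

/-- clamp to `[-π/2, π/2]` -/
noncomputable def pdClamp (x : ℝ) : ℝ := max (-(π / 2)) (min (π / 2) x)

lemma pdClamp_cont : Continuous pdClamp := by unfold pdClamp; fun_prop

lemma pdClamp_mem (x : ℝ) : pdClamp x ∈ Icc (-(π / 2)) (π / 2) := by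
  have := Real.pi_pos
  refine ⟨le_max_left _ _, max_le (by linarith) (min_le_left _ _)⟩

lemma pdClamp_ge {x : ℝ} (hx : π / 2 ≤ x) : pdClamp x = π / 2 := by
  have := Real.pi_pos
  unfold pdClamp
  rw [min_eq_left hx, max_eq_right (by linarith)]

lemma pdClamp_le {x : ℝ} (hx : x ≤ -(π / 2)) : pdClamp x = -(π / 2) := by
  have := Real.pi_pos
  unfold pdClamp
  rw [min_eq_right (by linarith), max_eq_left hx]

lemma pdClamp_eq {x : ℝ} (hx : x ∈ Ioo (-(π / 2)) (π / 2)) : pdClamp x = x := by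
  unfold pdClamp
  rw [min_eq_right hx.2.le, max_eq_right hx.1.le]

end PendulumAux

theorem coupled_pendulums_periodic_solution
    (n : ℕ) (hn : 1 ≤ n) (g T : ℝ) (hg : 0 < g) (hT : 0 < T)
    (m l γ σ : Fin n → ℝ)
    (hm : ∀ i, 0 < m i) (hl : ∀ i, 0 < l i) (hγ : ∀ i, 0 < γ i)
    -- the pendulums are pairwise disjoint
    (hσ : ∀ i j, i ≠ j → l i + l j < |σ i - σ j|)
    (h : ℝ → ℝ) (hh : ContDiff ℝ (⊤ : ℕ∞) h) (hhper : ∀ t, h (t + T) = h t)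
    (f : Fin n → Fin n → ℝ → ℝ → ℝ)
    (hfsmooth : ∀ i j, ContDiff ℝ (⊤ : ℕ∞) (fun u : ℝ × ℝ => f i j u.1 u.2))
    (hfpos : ∀ i j x y, 0 ≤ f i j x y) :
    ∃ φ p : ℝ → Fin n → ℝ,
      (∀ t i, HasDerivAt (fun s => φ s i) (p t i) t) ∧
      (∀ t i, HasDerivAt (fun s => p s i)
        (pendRHS n g m l γ σ h f i t (φ t) (p t i)) t) ∧
      (∀ t i, φ (t + T) i = φ t i) ∧
      (∀ t i, p (t + T) i = p t i) ∧
      (∀ t i, φ t i ∈ Set.Ioo (-(π / 2)) (π / 2)) := by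
  have : Fact (0 < T) := ⟨hT⟩
  have hpi := Real.pi_pos
  -- the second derivative of `h` as a function on the circle
  have hh2c : Continuous (deriv (deriv h)) := by
    have h2 : ContDiff ℝ (⊤ : ℕ∞) (deriv h) := (contDiff_infty_iff_deriv.1 hh).2
    exact (contDiff_infty_iff_deriv.1 h2).2.continuous
  have hh2p : Function.Periodic (deriv (deriv h)) T := pd_deriv_per (pd_deriv_per hhper)
  let H : AddCircle T → ℝ := hh2p.lift
  have hHc : Continuous H := continuous_coinduced_dom.2 hh2c
  have hH : ∀ t : ℝ, H (t : AddCircle T) = deriv (deriv h) t := fun t => rfl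
  -- the force without friction
  let G : AddCircle T → (Fin n → ℝ) → Fin n → ℝ := fun θ φ i =>
    -(H θ) / l i * Real.cos (φ i) + g / l i * Real.sin (φ i) + (1 / (m i * l i)) *
      ∑ j ∈ Finset.univ.erase i, interDot (σ i) (σ j) h (l i) (l j) (f i j) 0 (φ i) (φ j)
  have hGc : Continuous fun z : AddCircle T × (Fin n → ℝ) => G z.1 z.2 := by
    refine continuous_pi fun i => ?_
    have hs : Continuous fun z : AddCircle T × (Fin n → ℝ) =>
        ∑ j ∈ Finset.univ.erase i,
          interDot (σ i) (σ j) h (l i) (l j) (f i j) 0 (z.2 i) (z.2 j) := by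
      refine continuous_finsetSum _ fun j hj => ?_
      have hij : i ≠ j := (Finset.ne_of_mem_erase hj).symm
      exact (pd_inter_cont (hl i) (hl j) (hσ i j hij) (hfsmooth i j).continuous).comp
        (show Continuous fun z : AddCircle T × (Fin n → ℝ) => (z.2 i, z.2 j) by fun_prop)
    have h1 : Continuous fun z : AddCircle T × (Fin n → ℝ) => H z.1 := hHc.comp continuous_fst
    have h2 : Continuous fun z : AddCircle T × (Fin n → ℝ) =>
        -(H z.1) / l i * Real.cos (z.2 i) + g / l i * Real.sin (z.2 i) :=
      ((h1.neg.div_const _).mul (by fun_prop)).add (by fun_prop)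
    exact h2.add (continuous_const.mul hs)
  have hGt : ∀ (t : ℝ) φ p i, pendRHS n g m l γ σ h f i t φ p =
      G (t : AddCircle T) φ i - γ i * p := by
    intro t φ p i
    simp only [pendRHS, G, hH, pd_inter_t _ _ h _ _ _ t]
    ring
  let F0 : AddCircle T × (Fin n → ℝ) → Fin n → ℝ := fun z i =>
    G z.1 z.2 i - (1 + γ i) * z.2 i
  have hF0 : Continuous F0 := by
    refine continuous_pi fun i => ?_
    exact ((continuous_apply i).comp hGc).sub (by fun_prop)
  let P : (Fin n → ℝ) → (Fin n → ℝ) := fun φ i => pdClamp (φ i)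
  have hP : Continuous P := continuous_pi fun i => pdClamp_cont.comp (continuous_apply i)
  let F : C(AddCircle T × (Fin n → ℝ), Fin n → ℝ) :=
    ⟨fun z => F0 (z.1, P z.2), hF0.comp (continuous_fst.prodMk (hP.comp continuous_snd))⟩
  obtain ⟨M, hM⟩ := ((isCompact_univ (X := AddCircle T)).prod
    (isCompact_univ_pi fun _ : Fin n => isCompact_Icc (a := -(π / 2)) (b := π / 2)))
      |>.exists_bound_of_continuousOn hF0.continuousOn
  have hFM : ∀ z, ‖F z‖ ≤ M := fun z =>
    hM (z.1, P z.2) ⟨Set.mem_univ _, fun i _ => pdClamp_mem _⟩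
  obtain ⟨φ, q, hsys⟩ := od_system (T := T) (fun i => 1 + γ i)
    (fun i => by linarith [hγ i]) F M hFM
  let Φ : ℝ → Fin n → ℝ := fun t => φ (t : AddCircle T)
  let p : ℝ → Fin n → ℝ := fun t i => -(1 + γ i) * φ (t : AddCircle T) i + q (t : AddCircle T) i
  have hΦd : ∀ t i, HasDerivAt (fun s => Φ s i) (p t i) t := fun t i => (hsys t i).1
  have hpd : ∀ (t : ℝ) i, HasDerivAt (fun s => p s i)
      (G (t : AddCircle T) (P (Φ t)) i - γ i * p t i
        + (1 + γ i) * (Φ t i - pdClamp (Φ t i))) t := by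
    intro t i
    refine (((hsys t i).1.const_mul (-(1 + γ i))).add (hsys t i).2).congr_deriv ?_
    simp only [F, F0, p, Φ, P, ContinuousMap.coe_mk]
    ring
  have hΦper : ∀ t i, Φ (t + T) i = Φ t i := fun t i => by simp [Φ]
  have hΦc : ∀ i, Continuous fun t => Φ t i := fun i =>
    continuous_iff_continuousAt.2 fun t => (hΦd t i).continuousAt
  have hcos : ∀ x, 0 ≤ Real.cos (pdClamp x) := fun x =>
    Real.cos_nonneg_of_mem_Icc (pdClamp_mem x)
  have hub : ∀ t i, Φ t i < π / 2 := by
    intro t i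
    obtain ⟨t0, h0⟩ := od_max hT (hΦc i) (fun t => hΦper t i)
    refine lt_of_le_of_lt (h0 t) ?_
    by_contra hcon
    push Not at hcon
    obtain ⟨hp0, hd⟩ := pd_no_max (fun t => hΦd t i) (hpd t0 i) h0
    have hG : 0 < G (t0 : AddCircle T) (P (Φ t0)) i := by
      simp only [G, P, pdClamp_ge hcon, Real.cos_pi_div_two, Real.sin_pi_div_two, mul_zero,
        zero_add, mul_one]
      have h1 : 0 < g / l i := div_pos hg (hl i)
      have h2 : 0 ≤ 1 / (m i * l i) := (div_pos one_pos (mul_pos (hm i) (hl i))).le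
      have h3 : 0 ≤ ∑ j ∈ Finset.univ.erase i, interDot (σ i) (σ j) h (l i) (l j) (f i j) 0
          (π / 2) (pdClamp (Φ t0 j)) :=
        Finset.sum_nonneg fun j _ => pd_inter_top (hl j) (hfpos i j) (hcos _)
      have := mul_nonneg h2 h3
      linarith
    rw [hp0, pdClamp_ge hcon] at hd
    have := mul_nonneg (show 0 ≤ 1 + γ i by linarith [hγ i]) (sub_nonneg.2 hcon)
    linarith
  have hlb : ∀ t i, -(π / 2) < Φ t i := by
    intro t i
    obtain ⟨t0, h0⟩ := od_max hT (y := fun t => -(Φ t i)) (hΦc i).neg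
      (fun t => by simp only [hΦper t i])
    refine lt_of_lt_of_le ?_ (neg_le_neg_iff.1 (h0 t))
    by_contra hcon
    push Not at hcon
    obtain ⟨hp0, hd⟩ := pd_no_max (p := fun t => -(p t i)) (fun t => (hΦd t i).neg)
      (hpd t0 i).neg h0
    have hG : G (t0 : AddCircle T) (P (Φ t0)) i < 0 := by
      simp only [G, P, pdClamp_le hcon, Real.cos_neg, Real.sin_neg, Real.cos_pi_div_two,
        Real.sin_pi_div_two, mul_zero, zero_add, mul_one, mul_neg]
      have h1 : 0 < g / l i := div_pos hg (hl i)
      have h2 : 0 ≤ 1 / (m i * l i) := (div_pos one_pos (mul_pos (hm i) (hl i))).le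
      have h3 : ∑ j ∈ Finset.univ.erase i, interDot (σ i) (σ j) h (l i) (l j) (f i j) 0
          (-(π / 2)) (pdClamp (Φ t0 j)) ≤ 0 :=
        Finset.sum_nonpos fun j _ => pd_inter_bot (hl j) (hfpos i j) (hcos _)
      have := mul_nonpos_of_nonneg_of_nonpos h2 h3
      linarith
    have hp0' : p t0 i = 0 := by simpa using hp0
    rw [hp0', pdClamp_le hcon] at hd
    have := mul_nonneg (show 0 ≤ 1 + γ i by linarith [hγ i]) (sub_nonneg.2 hcon)
    linarith
  have hmem : ∀ t i, Φ t i ∈ Set.Ioo (-(π / 2)) (π / 2) := fun t i => ⟨hlb t i, hub t i⟩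
  refine ⟨Φ, p, hΦd, fun t i => ?_, hΦper, fun t i => by simp [p], hmem⟩
  refine (hpd t i).congr_deriv ?_
  have hPΦ : P (Φ t) = Φ t := funext fun i => pdClamp_eq (hmem t i)
  rw [hPΦ, pdClamp_eq (hmem t i), hGt]
  ring
end

section
/- Fix a time t ∈ ℝ, an index i, and angles φⱼ ∈ [−π/2, π/2] for all j ≠ i. Then, in the coupled pendulum system: (a) if φᵢ = π/2 and pᵢ = 0, the right-hand side of the equation for ṗᵢ is strictly positive, i.e. g/lᵢ + (1/(mᵢ lᵢ)) ∑_{j≠i} (F_{ij}, e_{φᵢ}) > 0; (b) if φᵢ = −π/2 and pᵢ = 0, the right-hand side is strictly negative, i.e. −g/lᵢ + (1/(mᵢ lᵢ)) ∑_{j≠i} (F_{ij}, e_{φᵢ}) < 0. In particular, (F_{ij}, e_{φᵢ}) ≥ 0 when φᵢ = π/2 and (F_{ij}, e_{φᵢ}) ≤ 0 when φᵢ = −π/2, for every j ≠ i. -/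
open Real

theorem coupled_pendulums_boundary_sign
    (n : ℕ) (hn : 1 ≤ n) (g T : ℝ) (hg : 0 < g) (hT : 0 < T)
    (m l γ σ : Fin n → ℝ)
    (hm : ∀ i, 0 < m i) (hl : ∀ i, 0 < l i) (hγ : ∀ i, 0 < γ i)
    -- the pendulums are pairwise disjoint
    (hσ : ∀ i j, i ≠ j → l i + l j < |σ i - σ j|)
    (h : ℝ → ℝ) (hh : ContDiff ℝ (⊤ : ℕ∞) h) (hhper : ∀ t, h (t + T) = h t)
    (f : Fin n → Fin n → ℝ → ℝ → ℝ)
    (hfsmooth : ∀ i j, ContDiff ℝ (⊤ : ℕ∞) (fun u : ℝ × ℝ => f i j u.1 u.2))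
    (hfpos : ∀ i j x y, 0 ≤ f i j x y)
    -- fixed time, index and angles of the other pendulums
    (t : ℝ) (i : Fin n) (φ : Fin n → ℝ)
    (hφ : ∀ j, j ≠ i → φ j ∈ Set.Icc (-(π / 2)) (π / 2)) :
    -- (a) at φᵢ = π/2 (with pᵢ = 0) the right-hand side is strictly positive
    (φ i = π / 2 →
      (0 < g / l i + (1 / (m i * l i)) *
          ∑ j ∈ Finset.univ.erase i,
            interDot (σ i) (σ j) h (l i) (l j) (f i j) t (φ i) (φ j)) ∧
      ∀ j, j ≠ i →
        0 ≤ interDot (σ i) (σ j) h (l i) (l j) (f i j) t (φ i) (φ j)) ∧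
    -- (b) at φᵢ = −π/2 (with pᵢ = 0) the right-hand side is strictly negative
    (φ i = -(π / 2) →
      (-(g / l i) + (1 / (m i * l i)) *
          ∑ j ∈ Finset.univ.erase i,
            interDot (σ i) (σ j) h (l i) (l j) (f i j) t (φ i) (φ j) < 0) ∧
      ∀ j, j ≠ i →
        interDot (σ i) (σ j) h (l i) (l j) (f i j) t (φ i) (φ j) ≤ 0) := by
  have hA : φ i = π / 2 → ∀ j, j ≠ i →
      0 ≤ interDot (σ i) (σ j) h (l i) (l j) (f i j) t (φ i) (φ j) := by
    intro hi j hj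
    have hc := Real.cos_nonneg_of_mem_Icc (hφ j hj)
    have hlc := mul_nonneg (hl j).le hc
    unfold interDot
    apply mul_nonneg (div_nonneg (hfpos _ _ _ _) (Real.sqrt_nonneg _))
    rw [hi]
    simp only [dot2, pendBob, ephi, Prod.fst_sub, Prod.snd_sub, Real.sin_pi_div_two,
      Real.cos_pi_div_two]
    linarith
  have hB : φ i = -(π / 2) → ∀ j, j ≠ i →
      interDot (σ i) (σ j) h (l i) (l j) (f i j) t (φ i) (φ j) ≤ 0 := by
    intro hi j hj
    have hc := Real.cos_nonneg_of_mem_Icc (hφ j hj)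
    have hlc := mul_nonneg (hl j).le hc
    unfold interDot
    apply mul_nonpos_of_nonneg_of_nonpos
      (div_nonneg (hfpos _ _ _ _) (Real.sqrt_nonneg _))
    rw [hi]
    simp only [dot2, pendBob, ephi, Prod.fst_sub, Prod.snd_sub, Real.sin_neg, Real.cos_neg,
      Real.sin_pi_div_two, Real.cos_pi_div_two]
    linarith
  have hgl : 0 < g / l i := div_pos hg (hl i)
  have hml : 0 ≤ 1 / (m i * l i) := (one_div_pos.mpr (mul_pos (hm i) (hl i))).le
  refine ⟨fun hi => ⟨?_, hA hi⟩, fun hi => ⟨?_, hB hi⟩⟩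
  · have hs := mul_nonneg hml
      (Finset.sum_nonneg (s := Finset.univ.erase i) fun j hj => hA hi j (Finset.ne_of_mem_erase hj))
    linarith
  · have hs := mul_nonpos_of_nonneg_of_nonpos hml
      (Finset.sum_nonpos (s := Finset.univ.erase i) fun j hj => hB hi j (Finset.ne_of_mem_erase hj))
    linarith
end
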